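/- For all integers t ≥ 3 and n ≥ 1, every red/blue edge-coloring of the complete graph on {1,…,N}, where N = (t−2)·n^2, contains a blue clique of size n or a semi-red t-clique. -/

import Mathlib

/-- `χ i j` is the color of the edge `{i, j}` for `i < j`: `true` = red, `false` = blue.
A semi-red `t`-clique: vertices `x_1 < x_2 < … < x_t` such that all edges `x_1 x_i`
(`2 ≤ i ≤ t`) and all edges `x_i x_t` (`1 ≤ i ≤ t − 1`) are red. -/
def ContainsSemiRedClique (N t : ℕ) (χ : Fin N → Fin N → Bool) : Prop :=
  ∃ f : Fin t → Fin N, StrictMono f ∧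
    (∀ (i : ℕ) (_hi0 : 0 < i) (hi : i < t),
      χ (f ⟨0, by omega⟩) (f ⟨i, hi⟩) = true) ∧
    (∀ (i : ℕ) (hi : i < t - 1),
      χ (f ⟨i, by omega⟩) (f ⟨t - 1, by omega⟩) = true)

/-- A blue clique of size `n`. -/
def ContainsBlueClique (N n : ℕ) (χ : Fin N → Fin N → Bool) : Prop :=
  ∃ f : Fin n → Fin N, StrictMono f ∧ ∀ i j : Fin n, i < j → χ (f i) (f j) = false

theorem greedy_aux {α : Type*} [LinearOrder α] (R : α → α → Bool) (d : ℕ) :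
    ∀ (m : ℕ) (S : Finset α), S.card = m →
      (∀ y ∈ S, (S.filter (fun x => x < y ∧ R x y = true)).card ≤ d) →
      ∃ T ⊆ S, S.card ≤ (d + 1) * T.card ∧ ∀ x ∈ T, ∀ y ∈ T, x < y → R x y = false := by
  intro m
  induction m using Nat.strong_induction_on with
  | _ m ih =>
    intro S hm hS
    rcases S.eq_empty_or_nonempty with rfl | hne
    · exact ⟨∅, by simp, by simp, by simp⟩
    · set y := S.max' hne with hy
      have hyS : y ∈ S := S.max'_mem hne
      set F := S.filter (fun x => x < y ∧ R x y = true) with hF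
      have hFc : F.card ≤ d := hS y hyS
      have hyF : y ∉ F := by simp [hF]
      have hsub : insert y F ⊆ S := by
        intro z hz
        rcases Finset.mem_insert.1 hz with rfl | hz
        · exact hyS
        · exact (Finset.mem_filter.1 hz).1
      have hc : (S \ insert y F).card + (F.card + 1) = S.card := by
        rw [← Finset.card_insert_of_notMem hyF]
        exact Finset.card_sdiff_add_card_eq_card hsub
      obtain ⟨T, hTS, hTc, hT⟩ := ih (S \ insert y F).card (by omega) (S \ insert y F) rfl (by
        intro z hz
        refine le_trans (Finset.card_le_card ?_) (hS z (Finset.mem_sdiff.1 hz).1)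
        exact Finset.filter_subset_filter _ Finset.sdiff_subset)
      have hyT : y ∉ T := fun h => (Finset.mem_sdiff.1 (hTS h)).2 (Finset.mem_insert_self _ _)
      refine ⟨insert y T, ?_, ?_, ?_⟩
      · intro z hz
        rcases Finset.mem_insert.1 hz with rfl | hz
        · exact hyS
        · exact (Finset.mem_sdiff.1 (hTS hz)).1
      · rw [Finset.card_insert_of_notMem hyT, mul_add]
        omega
      · intro a ha b hb hab
        have hbS : ∀ c ∈ T, c ≤ y := fun c hc =>
          S.le_max' c (Finset.mem_sdiff.1 (hTS hc)).1
        rcases Finset.mem_insert.1 ha with rfl | ha'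
        · rcases Finset.mem_insert.1 hb with hb | hb
          · exact absurd hab (by rw [hb]; exact lt_irrefl _)
          · exact absurd hab (not_lt.2 (hbS b hb))
        · rcases Finset.mem_insert.1 hb with hb | hb
          · subst hb
            have h1 := Finset.mem_sdiff.1 (hTS ha')
            by_contra hR
            exact h1.2 (Finset.mem_insert_of_mem
              (Finset.mem_filter.2 ⟨h1.1, hab, by simpa using hR⟩))
          · exact hT a ha' b hb hab

theorem blue_of_finset {N n : ℕ} {χ : Fin N → Fin N → Bool} (T : Finset (Fin N))
    (hc : n ≤ T.card) (hT : ∀ x ∈ T, ∀ y ∈ T, x < y → χ x y = false) :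
    ContainsBlueClique N n χ := by
  obtain ⟨U, hUT, hU⟩ := Finset.exists_subset_card_eq hc
  refine ⟨U.orderEmbOfFin hU, (U.orderEmbOfFin hU).strictMono, fun i j hij => ?_⟩
  exact hT _ (hUT (U.orderEmbOfFin_mem hU i)) _ (hUT (U.orderEmbOfFin_mem hU j))
    ((U.orderEmbOfFin hU).strictMono hij)

theorem semired_of_finset {N t : ℕ} {χ : Fin N → Fin N → Bool} (ht : 3 ≤ t) (x y : Fin N)
    (hxy : x < y) (hr : χ x y = true) (Z : Finset (Fin N)) (hc : t - 2 ≤ Z.card)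
    (hZ : ∀ z ∈ Z, x < z ∧ z < y ∧ χ x z = true ∧ χ z y = true) :
    ContainsSemiRedClique N t χ := by
  obtain ⟨U, hUZ, hU⟩ := Finset.exists_subset_card_eq hc
  have hyU : y ∉ U := fun h => lt_irrefl _ (hZ y (hUZ h)).2.1
  have hxU : x ∉ insert y U := by
    intro h
    rcases Finset.mem_insert.1 h with h | h
    · exact hxy.ne h
    · exact lt_irrefl _ (hZ x (hUZ h)).1
  have hW : (insert x (insert y U)).card = t := by
    rw [Finset.card_insert_of_notMem hxU, Finset.card_insert_of_notMem hyU]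
    omega
  set W := insert x (insert y U) with hWdef
  have hmem : ∀ w ∈ W, w = x ∨ w = y ∨ w ∈ U := by
    intro w hw
    simpa [hWdef] using hw
  have hlo : ∀ w ∈ W, x ≤ w := by
    intro w hw
    rcases hmem w hw with rfl | rfl | h
    · exact le_rfl
    · exact hxy.le
    · exact (hZ w (hUZ h)).1.le
  have hhi : ∀ w ∈ W, w ≤ y := by
    intro w hw
    rcases hmem w hw with rfl | rfl | h
    · exact hxy.le
    · exact le_rfl
    · exact (hZ w (hUZ h)).2.1.le
  let f := W.orderEmbOfFin hW
  have hfm : ∀ i, f i ∈ W := W.orderEmbOfFin_mem hW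
  have hsurj : ∀ w ∈ W, ∃ i, f i = w := by
    intro w hw
    have : w ∈ Set.range (W.orderEmbOfFin hW) := by
      rw [Finset.range_orderEmbOfFin]; exact hw
    exact this
  have h0 : f ⟨0, by omega⟩ = x := by
    obtain ⟨i, hi⟩ := hsurj x (by simp [hWdef])
    refine le_antisymm ?_ (hlo _ (hfm _))
    refine le_trans ?_ hi.le
    exact f.monotone (Fin.mk_le_of_le_val (Nat.zero_le _))
  have h1 : f ⟨t - 1, by omega⟩ = y := by
    obtain ⟨i, hi⟩ := hsurj y (by simp [hWdef])
    refine le_antisymm (hhi _ (hfm _)) ?_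
    refine le_trans hi.ge ?_
    refine f.monotone ?_
    rw [Fin.le_def]
    have := i.2
    simp only
    omega
  refine ⟨f, f.strictMono, ?_, ?_⟩
  · intro i hi0 hi
    have hlt : f ⟨0, by omega⟩ < f ⟨i, hi⟩ := f.strictMono (by rw [Fin.lt_def]; exact hi0)
    rw [h0] at hlt ⊢
    rcases hmem _ (hfm ⟨i, hi⟩) with h | h | h
    · exact absurd h hlt.ne'
    · rw [h]; exact hr
    · exact (hZ _ (hUZ h)).2.2.1
  · intro i hi
    have hlt : f ⟨i, by omega⟩ < f ⟨t - 1, by omega⟩ :=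
      f.strictMono (by rw [Fin.lt_def]; exact hi)
    rw [h1] at hlt ⊢
    rcases hmem _ (hfm ⟨i, by omega⟩) with h | h | h
    · rw [h]; exact hr
    · exact absurd h hlt.ne
    · exact (hZ _ (hUZ h)).2.2.2

/-- for `t ≥ 3` and `n ≥ 1`, every red/blue edge-coloring of `K_N`
with `N = (t − 2)·n²` contains a blue clique of size `n` or a semi-red `t`-clique. -/
theorem stmt19 (t n N : ℕ) (ht : 3 ≤ t) (hn : 1 ≤ n)
    (hN : N = (t - 2) * n ^ 2) (χ : Fin N → Fin N → Bool) :
    ContainsBlueClique N n χ ∨ ContainsSemiRedClique N t χ := by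
  by_cases hs : ContainsSemiRedClique N t χ
  · exact Or.inr hs
  left
  obtain ⟨s, rfl⟩ : ∃ s, t = s + 3 := ⟨t - 3, by omega⟩
  obtain ⟨k, rfl⟩ : ∃ k, n = k + 1 := ⟨n - 1, by omega⟩
  have e : s + 3 - 2 = s + 1 := by omega
  rw [e] at hN
  by_cases hx : ∃ x : Fin N, (s + 1) * k <
      (Finset.univ.filter (fun y => x < y ∧ χ x y = true)).card
  · obtain ⟨x, hx⟩ := hx
    obtain ⟨T, -, hTc, hT⟩ := greedy_aux χ s _
      (Finset.univ.filter (fun y => x < y ∧ χ x y = true)) rfl (by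
        intro y hy
        by_contra hcon
        have hy' := (Finset.mem_filter.1 hy).2
        refine hs (semired_of_finset ht x y hy'.1 hy'.2 _ (by rw [e]; exact not_le.1 hcon) ?_)
        intro z hz
        simp only [Finset.mem_filter, Finset.mem_univ, true_and] at hz
        exact ⟨hz.1.1, hz.2.1, hz.1.2, hz.2.2⟩)
    exact blue_of_finset T (Nat.lt_of_mul_lt_mul_left (lt_of_lt_of_le hx hTc)) hT
  · push Not at hx
    obtain ⟨T, -, hTc, hT⟩ := greedy_aux (α := (Fin N)ᵒᵈ)
      (fun a b => χ (OrderDual.ofDual b) (OrderDual.ofDual a)) ((s + 1) * k) _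
      Finset.univ rfl (by
        intro y _
        refine le_trans (le_of_eq ?_) (hx (OrderDual.ofDual y))
        refine Finset.card_bij (fun a _ => OrderDual.ofDual a) ?_ ?_ ?_
        · intro a ha
          simpa using ha
        · intro a _ b _ h
          exact h
        · intro b hb
          exact ⟨OrderDual.toDual b, Finset.mem_filter.2
            ⟨Finset.mem_univ _, (Finset.mem_filter.1 hb).2⟩, rfl⟩)
    have hcard : (Finset.univ : Finset (Fin N)ᵒᵈ).card = N := by simp
    rw [hcard] at hTc
    refine blue_of_finset (T.map OrderDual.ofDual.toEmbedding) ?_ ?_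
    · rw [Finset.card_map]
      by_contra hlt
      have hlt : T.card ≤ k := by omega
      have h2 : ((s + 1) * k + 1) * T.card ≤ ((s + 1) * k + 1) * k := Nat.mul_le_mul_left _ hlt
      nlinarith [Nat.zero_le (s * k), Nat.zero_le s, Nat.zero_le k]
    · intro a ha b hb hab
      simp only [Finset.mem_map, Equiv.coe_toEmbedding] at ha hb
      obtain ⟨a, ha, rfl⟩ := ha
      obtain ⟨b, hb, rfl⟩ := hb
      exact hT b hb a ha (by simpa using hab)
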